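/- Let d ≥ 1, let f, g : ℝ^d → ℝ^d satisfy f(0) = g(0) = 0 and the local Lipschitz condition with nondecreasing constants L_R, let p ∈ (0,1) and λ > 0 be such that Φ_{f,g}(x) ≤ −λ for all x ≠ 0, and let h : (0,Δ₀] → (0,∞) be decreasing with h(Δ) → ∞ and L_{h(Δ)}⁴·Δ → 0 as Δ → 0⁺. Then for every ε ∈ (0,λ) there exists Δ* ∈ (0,Δ₀] such that for every Δ ∈ (0,Δ*) and every x₀ ∈ ℝ^d, the modified truncated Euler–Maruyama scheme X₀ = x₀, X_{k+1} = X_k + f_{h(Δ)}(X_k)·Δ + g_{h(Δ)}(X_k)·ξ_k driven by i.i.d. real Gaussian random variables with mean 0 and variance Δ is almost surely exponentially stable: limsup_{k→∞} (log|X_k|)/(kΔ) ≤ −(λ−ε) almost surely. -/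

import Mathlib

open scoped Classical

open Set Filter MeasureTheory ProbabilityTheory
open scoped RealInnerProductSpace ENNReal

/-- The modified truncated function `f_h`. -/
noncomputable def trunc {d : ℕ} (f : EuclideanSpace ℝ (Fin d) → EuclideanSpace ℝ (Fin d))
    (h : ℝ) (x : EuclideanSpace ℝ (Fin d)) : EuclideanSpace ℝ (Fin d) :=
  if ‖x‖ ≤ h then f x else (‖x‖ / h) • f ((h / ‖x‖) • x)

/-- The dissipativity functional `Φ_{f,g}`. -/
noncomputable def Phi {d : ℕ} (f g : EuclideanSpace ℝ (Fin d) → EuclideanSpace ℝ (Fin d))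
    (p : ℝ) (x : EuclideanSpace ℝ (Fin d)) : ℝ :=
  (⟪x, f x⟫ + (1 / 2) * ‖g x‖ ^ 2) / ‖x‖ ^ 2 + ((p - 2) / 2) * ⟪x, g x⟫ ^ 2 / ‖x‖ ^ 4


lemma aux_taylor {a : ℝ} (ha0 : 0 < a) (ha1 : a < 1) {y : ℝ} (hy : -1 ≤ y) :
    (1 + y) ^ a ≤ 1 + a * y + a * (a - 1) / 2 * y ^ 2 + a * (a - 1) * (a - 2) / 6 * y ^ 3 := by
  let D : ℝ → ℝ := fun t => 1 + a * (t - 1) + a * (a - 1) / 2 * (t - 1) ^ 2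
    + a * (a - 1) * (a - 2) / 6 * (t - 1) ^ 3 - t ^ a
  let D' : ℝ → ℝ := fun t => a + a * (a - 1) * (t - 1)
    + a * (a - 1) * (a - 2) / 2 * (t - 1) ^ 2 - a * t ^ (a - 1)
  have hd1 : ∀ t : ℝ, 0 < t → HasDerivAt D (D' t) t := by
    intro t ht
    have h1 : HasDerivAt (fun s : ℝ => s - 1) 1 t := (hasDerivAt_id t).sub_const 1
    have h2 := Real.hasDerivAt_rpow_const (x := t) (p := a) (Or.inl ht.ne')
    have := (((((hasDerivAt_const t (1:ℝ)).add (h1.const_mul a)).add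
      ((h1.pow 2).const_mul (a * (a - 1) / 2))).add
      ((h1.pow 3).const_mul (a * (a - 1) * (a - 2) / 6))).sub h2)
    refine this.congr_deriv ?_
    simp only [D']
    norm_num
    ring
  have hd2 : ∀ t : ℝ, 0 < t → HasDerivAt D'
      (a * (a - 1) * (1 + (a - 2) * (t - 1) - t ^ (a - 2))) t := by
    intro t ht
    have h1 : HasDerivAt (fun s : ℝ => s - 1) 1 t := (hasDerivAt_id t).sub_const 1
    have h2 := Real.hasDerivAt_rpow_const (x := t) (p := a - 1) (Or.inl ht.ne')
    have := (((((hasDerivAt_const t a).add (h1.const_mul (a * (a - 1)))).add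
      ((h1.pow 2).const_mul (a * (a - 1) * (a - 2) / 2)))).sub (h2.const_mul a))
    refine this.congr_deriv ?_
    have : a - 1 - 1 = a - 2 := by ring
    rw [this]
    norm_num
    ring
  have hconv : ConvexOn ℝ (Ici 0) D := by
    refine convexOn_of_hasDerivWithinAt2_nonneg (convex_Ici 0) (f' := D')
      (f'' := fun t => a * (a - 1) * (1 + (a - 2) * (t - 1) - t ^ (a - 2))) ?_ ?_ ?_ ?_
    · have : Continuous D := by
        have := Real.continuous_rpow_const ha0.le
        fun_prop
      exact this.continuousOn
    · intro t ht
      rw [interior_Ici] at ht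
      exact (hd1 t ht).hasDerivWithinAt
    · intro t ht
      rw [interior_Ici] at ht
      exact (hd2 t ht).hasDerivWithinAt
    · intro t ht
      rw [interior_Ici] at ht
      have ht : 0 < t := ht
      have h1 : 1 + (a - 2) * (t - 1) ≤ t ^ (a - 2) := by
        rw [Real.rpow_def_of_pos ht]
        have e1 := Real.add_one_le_exp (Real.log t * (a - 2))
        have e2 := Real.log_le_sub_one_of_pos ht
        nlinarith
      have : a * (a - 1) ≤ 0 := by nlinarith
      exact mul_nonneg_of_nonpos_of_nonpos this (by linarith)
  have hmin : IsMinOn D (Ici 0) 1 := by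
    refine hconv.isMinOn_of_rightDeriv_eq_zero (by simp) ?_
    have := (hd1 1 one_pos).hasDerivWithinAt (s := Ioi 1)
    rw [this.derivWithin (uniqueDiffWithinAt_Ioi 1)]
    simp [D']
  have := hmin (show (1 + y) ∈ Ici (0:ℝ) by simp; linarith)
  simp [D] at this
  linarith

lemma aux_moments (v : NNReal) : 
    (∫ x, x ∂gaussianReal 0 v = 0) ∧ (∫ x, x ^ 2 ∂gaussianReal 0 v = v) ∧
    (∫ x, x ^ 3 ∂gaussianReal 0 v = 0) ∧ (∫ x, x ^ 4 ∂gaussianReal 0 v = 3 * v ^ 2) ∧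
    (∫ x, x ^ 5 ∂gaussianReal 0 v = 0) ∧ (∫ x, x ^ 6 ∂gaussianReal 0 v = 15 * v ^ 3) := by
  have key : ∀ n : ℕ, ∀ t : ℝ, HasDerivAt
      (fun t => ∫ x, x ^ n * Real.exp (t * x) ∂gaussianReal 0 v)
      (∫ x, x ^ (n + 1) * Real.exp (t * x) ∂gaussianReal 0 v) t := by
    intro n t
    exact hasDerivAt_integral_pow_mul_exp_real (X := id) (by simp) n
  have M0 : ∀ t : ℝ, ∫ x, x ^ 0 * Real.exp (t * x) ∂gaussianReal 0 v
      = 1 * Real.exp (v * t ^ 2 / 2) := by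
    intro t
    have := congrFun (mgf_id_gaussianReal (μ := 0) (v := v)) t
    simpa [mgf] using this
  have hE : ∀ t : ℝ, HasDerivAt (fun t : ℝ => Real.exp (v * t ^ 2 / 2))
      (Real.exp (v * t ^ 2 / 2) * (v * t)) t := by
    intro t
    have h1 : HasDerivAt (fun t : ℝ => v * t ^ 2 / 2) ((v:ℝ) * t) t := by
      refine ((((hasDerivAt_id t).pow 2).const_mul (v:ℝ)).div_const 2).congr_deriv ?_
      simp; ring
    exact h1.exp
  have step : ∀ (n : ℕ) (p p' q : ℝ → ℝ), (∀ t, HasDerivAt p (p' t) t) →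
      (∀ t, p' t + p t * (v * t) = q t) →
      (∀ t : ℝ, ∫ x, x ^ n * Real.exp (t * x) ∂gaussianReal 0 v
        = p t * Real.exp (v * t ^ 2 / 2)) →
      ∀ t : ℝ, ∫ x, x ^ (n + 1) * Real.exp (t * x) ∂gaussianReal 0 v
        = q t * Real.exp (v * t ^ 2 / 2) := by
    intro n p p' q hp hq hM t
    have h1 := key n t
    have h2 := (hp t).mul (hE t)
    have h3 : (fun t : ℝ => ∫ x, x ^ n * Real.exp (t * x) ∂gaussianReal 0 v)
      = (p * fun t => Real.exp (v * t ^ 2 / 2)) := funext hM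
    rw [h3] at h1
    rw [h1.unique h2, ← hq t]
    ring
  have mono : ∀ (c : ℝ) (n : ℕ) (t : ℝ), HasDerivAt (fun t : ℝ => c * t ^ n) 
      (c * (n * t ^ (n - 1))) t := fun c n t => (hasDerivAt_pow n t).const_mul c
  have M1 := step 0 (fun _ => 1) (fun _ => 0) (fun t => (v:ℝ) * t ^ 1)
    (fun t => hasDerivAt_const _ _) (fun t => by ring) M0
  have M2 := step 1 _ _ (fun t => (v:ℝ) * t ^ 0 + (v:ℝ) ^ 2 * t ^ 2)
    (fun t => mono _ _ t) (fun t => by norm_num; ring) M1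
  have M3 := step 2 _ _ (fun t => 3 * (v:ℝ) ^ 2 * t ^ 1 + (v:ℝ) ^ 3 * t ^ 3)
    (fun t => (mono _ _ t).add (mono _ _ t)) (fun t => by norm_num; ring) M2
  have M4 := step 3 _ _ (fun t => 3 * (v:ℝ) ^ 2 * t ^ 0 + 6 * (v:ℝ) ^ 3 * t ^ 2 + (v:ℝ) ^ 4 * t ^ 4)
    (fun t => (mono _ _ t).add (mono _ _ t)) (fun t => by norm_num; ring) M3
  have M5 := step 4 _ _ (fun t => 15 * (v:ℝ) ^ 3 * t ^ 1 + 10 * (v:ℝ) ^ 4 * t ^ 3 + (v:ℝ) ^ 5 * t ^ 5)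
    (fun t => ((mono _ _ t).add (mono _ _ t)).add (mono _ _ t)) (fun t => by norm_num; ring) M4
  have M6 := step 5 _ _ (fun t => 15 * (v:ℝ) ^ 3 + 45 * (v:ℝ) ^ 4 * t ^ 2
      + 15 * (v:ℝ) ^ 5 * t ^ 4 + (v:ℝ) ^ 6 * t ^ 6)
    (fun t => ((mono _ _ t).add (mono _ _ t)).add (mono _ _ t)) (fun t => by norm_num; ring) M5
  refine ⟨?_, ?_, ?_, ?_, ?_, ?_⟩
  · have := M1 0
    simp only [zero_add, pow_one, zero_mul, Real.exp_zero, mul_one, mul_zero] at this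
    exact this
  · simpa using M2 0
  · simpa using M3 0
  · simpa using M4 0
  · simpa using M5 0
  · simpa using M6 0

lemma aux_integrable_pow (v : NNReal) (n : ℕ) :
    Integrable (fun x : ℝ => x ^ n) (gaussianReal 0 v) := by
  have h := integrable_pow_of_mem_interior_integrableExpSet (X := id) (μ := gaussianReal 0 v)
    (by simp) n
  simpa using h

lemma aux_integral_poly (v : NNReal) (c0 c1 c2 c3 c4 c5 c6 : ℝ) :
    Integrable (fun x : ℝ => c0 + c1 * x + c2 * x ^ 2 + c3 * x ^ 3 + c4 * x ^ 4 + c5 * x ^ 5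
      + c6 * x ^ 6) (gaussianReal 0 v) ∧
    ∫ x, (c0 + c1 * x + c2 * x ^ 2 + c3 * x ^ 3 + c4 * x ^ 4 + c5 * x ^ 5
      + c6 * x ^ 6) ∂gaussianReal 0 v = c0 + c2 * v + c4 * (3 * v ^ 2) + c6 * (15 * v ^ 3) := by
  obtain ⟨m1, m2, m3, m4, m5, m6⟩ := aux_moments v
  have i0 : Integrable (fun _ : ℝ => c0) (gaussianReal 0 v) := integrable_const c0
  have i1 : Integrable (fun x : ℝ => c1 * x) (gaussianReal 0 v) := by
    simpa using (aux_integrable_pow v 1).const_mul c1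
  have i2 := (aux_integrable_pow v 2).const_mul c2
  have i3 := (aux_integrable_pow v 3).const_mul c3
  have i4 := (aux_integrable_pow v 4).const_mul c4
  have i5 := (aux_integrable_pow v 5).const_mul c5
  have i6 := (aux_integrable_pow v 6).const_mul c6
  have j1 : Integrable (fun x : ℝ => c0 + c1 * x) (gaussianReal 0 v) := i0.add i1
  have j2 : Integrable (fun x : ℝ => c0 + c1 * x + c2 * x ^ 2) (gaussianReal 0 v) := j1.add i2
  have j3 : Integrable (fun x : ℝ => c0 + c1 * x + c2 * x ^ 2 + c3 * x ^ 3) (gaussianReal 0 v) :=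
    j2.add i3
  have j4 : Integrable (fun x : ℝ => c0 + c1 * x + c2 * x ^ 2 + c3 * x ^ 3 + c4 * x ^ 4)
    (gaussianReal 0 v) := j3.add i4
  have j5 : Integrable (fun x : ℝ => c0 + c1 * x + c2 * x ^ 2 + c3 * x ^ 3 + c4 * x ^ 4
    + c5 * x ^ 5) (gaussianReal 0 v) := j4.add i5
  refine ⟨j5.add i6, ?_⟩
  rw [integral_add j5 i6, integral_add j4 i5, integral_add j3 i4, integral_add j2 i3,
    integral_add j1 i2, integral_add i0 i1]
  simp only [integral_const_mul, m2, m3, m4, m5, m6]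
  simp
  rw [integral_const_mul, m1, mul_zero]

set_option maxHeartbeats 1000000 in
lemma aux_arith {H Δ δ a c w U V q lam : ℝ} (hH : 1 ≤ H) (hΔ : 0 < Δ)
    (hδ1 : δ ≤ 1) (hs : H ^ 4 * Δ ≤ δ) (ha : |a| ≤ H) (hc : |c| ≤ H) (hw : |w| ≤ H ^ 2)
    (hU0 : 0 ≤ U) (hU : U ≤ H ^ 2) (hV0 : 0 ≤ V) (hV : V ≤ H ^ 2) (hq0 : 0 < q) (hq : q < 1 / 2)
    (hphi : a + 1 / 2 * V + (q - 1) * c ^ 2 ≤ -lam) (A B C : ℝ)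
    (hA : A = 2 * Δ * a + Δ ^ 2 * U) (hB : B = 2 * c + 2 * Δ * w) (hC : C = V) :
    1 + q * (A + C * Δ) + q * (q - 1) / 2 * (A ^ 2 + B ^ 2 * Δ + 2 * A * C * Δ + 3 * C ^ 2 * Δ ^ 2)
      + q * (q - 1) * (q - 2) / 6 * (A ^ 3 + 3 * A ^ 2 * C * Δ + 3 * A * B ^ 2 * Δ
        + 9 * A * C ^ 2 * Δ ^ 2 + 9 * B ^ 2 * C * Δ ^ 2 + 15 * C ^ 3 * Δ ^ 3)
      ≤ 1 - 2 * q * Δ * (lam - 200 * δ) := by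
  have hp : ∀ n : ℕ, n ≤ 4 → H ^ n * Δ ≤ δ := fun n hn =>
    le_trans (mul_le_mul_of_nonneg_right (pow_le_pow_right₀ hH hn) hΔ.le) hs
  have p0 := hp 0 (by norm_num)
  have p1 := hp 1 (by norm_num)
  have p2 := hp 2 (by norm_num)
  have p3 := hp 3 (by norm_num)
  have hH0 : 0 < H := by linarith
  have hδ0 : 0 ≤ δ := le_trans (by positivity) hs
  have hA' : |A| ≤ 3 * Δ * H := by
    rw [hA]
    refine (abs_add_le _ _).trans ?_
    rw [abs_mul, abs_of_pos (by positivity : 0 < 2 * Δ), abs_of_nonneg (by positivity : 0 ≤ Δ ^ 2 * U)]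
    have h1 : 2 * Δ * |a| ≤ 2 * Δ * H := by gcongr
    have h2 : Δ ^ 2 * U ≤ Δ ^ 2 * H ^ 2 := by gcongr
    have h3 : Δ ^ 2 * H ^ 2 = (Δ * H) * (H ^ 1 * Δ) := by ring
    have h4 : (Δ * H) * (H ^ 1 * Δ) ≤ (Δ * H) * 1 := by gcongr; linarith
    linarith
  have hB' : |B| ≤ 4 * H := by
    rw [hB]
    refine (abs_add_le _ _).trans ?_
    rw [abs_mul, abs_mul, abs_of_pos (by positivity : 0 < 2 * Δ), abs_of_pos (by norm_num : (0:ℝ) < 2)]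
    have h2 : 2 * Δ * |w| ≤ 2 * Δ * H ^ 2 := by gcongr
    have h3 : 2 * Δ * H ^ 2 = 2 * H * (H ^ 1 * Δ) := by ring
    have h4 : 2 * H * (H ^ 1 * Δ) ≤ 2 * H * 1 := by gcongr; linarith
    linarith
  have hC0 : 0 ≤ C := by rw [hC]; exact hV0
  have hC' : C ≤ H ^ 2 := by rw [hC]; exact hV
  have hA1 : A ≤ 3 * Δ * H := (le_abs_self _).trans hA'
  have hA2 : A ^ 2 ≤ (3 * Δ * H) ^ 2 := by rw [← sq_abs]; gcongr
  have hB2 : B ^ 2 ≤ (4 * H) ^ 2 := by rw [← sq_abs]; gcongr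
  have hA3 : A ^ 3 ≤ (3 * Δ * H) ^ 3 := by
    have : A ^ 3 ≤ |A| ^ 3 := by rw [← abs_pow]; exact le_abs_self _
    exact this.trans (by gcongr)
  have sm : ∀ n : ℕ, n ≤ 4 → 0 ≤ H ^ n * Δ := fun n hn => by positivity
  have hδδ : δ * δ ≤ δ := by nlinarith
  -- products
  have pp : ∀ m n : ℕ, m ≤ 4 → n ≤ 4 → (H ^ m * Δ) * (H ^ n * Δ) ≤ δ := fun m n hm hn =>
    (mul_le_mul (hp m hm) (hp n hn) (sm n hn) hδ0).trans hδδ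
  have M3 : A ^ 3 + 3 * A ^ 2 * C * Δ + 3 * A * B ^ 2 * Δ
        + 9 * A * C ^ 2 * Δ ^ 2 + 9 * B ^ 2 * C * Δ ^ 2 + 15 * C ^ 3 * Δ ^ 3 ≤ 400 * Δ * δ := by
    have t2 : 3 * A ^ 2 * C * Δ ≤ 3 * (3 * Δ * H) ^ 2 * H ^ 2 * Δ := by gcongr
    have t3 : 3 * A * B ^ 2 * Δ ≤ 3 * (3 * Δ * H) * (4 * H) ^ 2 * Δ := by
      have : 3 * A * B ^ 2 * Δ ≤ 3 * (3 * Δ * H) * B ^ 2 * Δ := by gcongr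
      exact this.trans (by gcongr)
    have t4 : 9 * A * C ^ 2 * Δ ^ 2 ≤ 9 * (3 * Δ * H) * (H ^ 2) ^ 2 * Δ ^ 2 := by
      have : 9 * A * C ^ 2 * Δ ^ 2 ≤ 9 * (3 * Δ * H) * C ^ 2 * Δ ^ 2 := by gcongr
      exact this.trans (by gcongr)
    have t5 : 9 * B ^ 2 * C * Δ ^ 2 ≤ 9 * (4 * H) ^ 2 * H ^ 2 * Δ ^ 2 := by gcongr
    have t6 : 15 * C ^ 3 * Δ ^ 3 ≤ 15 * (H ^ 2) ^ 3 * Δ ^ 3 := by gcongr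
    have : A ^ 3 + 3 * A ^ 2 * C * Δ + 3 * A * B ^ 2 * Δ
        + 9 * A * C ^ 2 * Δ ^ 2 + 9 * B ^ 2 * C * Δ ^ 2 + 15 * C ^ 3 * Δ ^ 3 ≤
        Δ * (27 * ((H ^ 1 * Δ) * (H ^ 2 * Δ)) + 27 * ((H ^ 2 * Δ) * (H ^ 2 * Δ))
          + 144 * (H ^ 3 * Δ) + 27 * ((H ^ 2 * Δ) * (H ^ 3 * Δ)) + 144 * (H ^ 4 * Δ)
          + 15 * ((H ^ 3 * Δ) * (H ^ 3 * Δ))) := by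
      refine (add_le_add (add_le_add (add_le_add (add_le_add (add_le_add hA3 t2) t3) t4) t5) t6).trans
        (le_of_eq ?_)
      ring
    refine this.trans ?_
    have := pp 1 2 (by norm_num) (by norm_num)
    have := pp 2 2 (by norm_num) (by norm_num)
    have := pp 2 3 (by norm_num) (by norm_num)
    have := pp 3 3 (by norm_num) (by norm_num)
    have e : 400 * Δ * δ = Δ * (400 * δ) := by ring
    rw [e]
    refine mul_le_mul_of_nonneg_left ?_ hΔ.le
    linarith
  have M2 : 4 * Δ * c ^ 2 - 8 * Δ * δ ≤
      A ^ 2 + B ^ 2 * Δ + 2 * A * C * Δ + 3 * C ^ 2 * Δ ^ 2 := by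
    have e1 : A ^ 2 + B ^ 2 * Δ + 2 * A * C * Δ + 3 * C ^ 2 * Δ ^ 2
      = (A + C * Δ) ^ 2 + 2 * (C * Δ) ^ 2 + B ^ 2 * Δ := by ring
    have e2 : B ^ 2 * Δ = 4 * Δ * c ^ 2 + 8 * Δ * (Δ * (c * w)) + 4 * Δ * (Δ * w) ^ 2 := by
      rw [hB]; ring
    have e3 : -δ ≤ Δ * (c * w) := by
      have : |c * w| ≤ H ^ 3 := by
        rw [abs_mul]
        calc |c| * |w| ≤ H * H ^ 2 := by gcongr
          _ = H ^ 3 := by ring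
      have := neg_le_of_abs_le this
      have : Δ * (-H ^ 3) ≤ Δ * (c * w) := by gcongr
      linarith
    have e4 : 8 * Δ * (-δ) ≤ 8 * Δ * (Δ * (c * w)) := by gcongr
    have : 0 ≤ (A + C * Δ) ^ 2 + 2 * (C * Δ) ^ 2 + 4 * Δ * (Δ * w) ^ 2 := by positivity
    linarith
  have M1 : A + C * Δ ≤ 2 * Δ * a + Δ * V + Δ * δ := by
    rw [hA, hC]
    have : Δ ^ 2 * U ≤ Δ * δ := by
      calc Δ ^ 2 * U ≤ Δ ^ 2 * H ^ 2 := by gcongr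
        _ = Δ * (H ^ 2 * Δ) := by ring
        _ ≤ _ := by gcongr
    linarith
  have k1 := mul_le_mul_of_nonneg_left M1 hq0.le
  have k2 := mul_le_mul_of_nonneg_left M2 (show 0 ≤ q * (1 - q) / 2 by
    have : 0 < 1 - q := by linarith
    positivity)
  have k3 : q * (q - 1) * (q - 2) / 6 * (A ^ 3 + 3 * A ^ 2 * C * Δ + 3 * A * B ^ 2 * Δ
        + 9 * A * C ^ 2 * Δ ^ 2 + 9 * B ^ 2 * C * Δ ^ 2 + 15 * C ^ 3 * Δ ^ 3) ≤ 
        q * (1/3) * (400 * Δ * δ) := by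
    have h1 : q * (q - 1) * (q - 2) / 6 = q * ((1 - q) * (2 - q) / 6) := by ring
    have h0 : 0 ≤ q * ((1 - q) * (2 - q) / 6) := by
      have : 0 < 1 - q := by linarith
      have : 0 < 2 - q := by linarith
      positivity
    rw [h1]
    refine (mul_le_mul_of_nonneg_left M3 h0).trans ?_
    have : (1 - q) * (2 - q) / 6 ≤ 1 / 3 := by
      have h3 : 0 ≤ q * (3 - q) := mul_nonneg hq0.le (by linarith)
      linarith
    exact mul_le_mul_of_nonneg_right (mul_le_mul_of_nonneg_left this hq0.le) (by positivity)
  have k4 := mul_le_mul_of_nonneg_left hphi (show 0 ≤ 2 * q * Δ by positivity)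
  have k5 : 0 ≤ q * Δ * δ := by positivity
  have k6 : 0 ≤ q * q * Δ * δ := by positivity
  clear M1 M2 M3 hA2 hA3 hB2
  generalize A ^ 2 + B ^ 2 * Δ + 2 * A * C * Δ + 3 * C ^ 2 * Δ ^ 2 = m2 at *
  generalize A ^ 3 + 3 * A ^ 2 * C * Δ + 3 * A * B ^ 2 * Δ
        + 9 * A * C ^ 2 * Δ ^ 2 + 9 * B ^ 2 * C * Δ ^ 2 + 15 * C ^ 3 * Δ ^ 3 = m3 at *
  generalize A + C * Δ = m1 at *
  clear * - k1 k2 k3 k4 k5 k6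
  linarith

lemma aux_step {E : Type*} [NormedAddCommGroup E] [InnerProductSpace ℝ E] (e u v : E)
    {H Δ δ p lam : ℝ} (he : ‖e‖ = 1) (hu : ‖u‖ ≤ H) (hv : ‖v‖ ≤ H) (hH : 1 ≤ H) (hΔ : 0 < Δ)
    (hδ1 : δ ≤ 1) (hs : H ^ 4 * Δ ≤ δ) (hp0 : 0 < p) (hp1 : p < 1)
    (hphi : ⟪e, u⟫ + 1 / 2 * ‖v‖ ^ 2 + (p / 2 - 1) * ⟪e, v⟫ ^ 2 ≤ -lam) :
    ∫⁻ x, ENNReal.ofReal (‖e + Δ • u + x • v‖ ^ p) ∂gaussianReal 0 Δ.toNNReal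
      ≤ ENNReal.ofReal (1 - p * Δ * (lam - 200 * δ)) := by
  set q := p / 2 with hq
  set A := 2 * Δ * ⟪e, u⟫ + Δ ^ 2 * ‖u‖ ^ 2 with hA
  set B := 2 * ⟪e, v⟫ + 2 * Δ * ⟪u, v⟫ with hB
  set C := ‖v‖ ^ 2 with hC
  have hH0 : 0 ≤ H := by linarith
  have hnorm : ∀ x : ℝ, ‖e + Δ • u + x • v‖ ^ 2 = 1 + (A + B * x + C * x ^ 2) := by
    intro x
    rw [norm_add_sq_real, norm_add_sq_real, norm_smul, norm_smul, he, inner_add_left,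
      inner_smul_left, inner_smul_right, inner_smul_right, inner_smul_right, mul_pow, mul_pow,
      Real.norm_eq_abs, Real.norm_eq_abs, sq_abs, sq_abs, hA, hB, hC]
    simp
    ring
  have hbound : ∀ x : ℝ, ‖e + Δ • u + x • v‖ ^ p ≤ 1 + q * (A + B * x + C * x ^ 2) 
      + q * (q - 1) / 2 * (A + B * x + C * x ^ 2) ^ 2
      + q * (q - 1) * (q - 2) / 6 * (A + B * x + C * x ^ 2) ^ 3 := by
    intro x
    have h1 : ‖e + Δ • u + x • v‖ ^ p = (1 + (A + B * x + C * x ^ 2)) ^ q := by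
      rw [← hnorm, ← Real.rpow_natCast, ← Real.rpow_mul (norm_nonneg _), hq]
      congr 1
      push_cast; ring
    rw [h1]
    refine aux_taylor (by positivity) (by linarith) ?_
    have := sq_nonneg ‖e + Δ • u + x • v‖
    rw [hnorm] at this
    linarith
  obtain ⟨hi, hint⟩ := aux_integral_poly Δ.toNNReal
    (1 + q * A + q * (q - 1) / 2 * A ^ 2 + q * (q - 1) * (q - 2) / 6 * A ^ 3)
    (q * B + q * (q - 1) / 2 * (2 * A * B) + q * (q - 1) * (q - 2) / 6 * (3 * A ^ 2 * B))
    (q * C + q * (q - 1) / 2 * (B ^ 2 + 2 * A * C)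
      + q * (q - 1) * (q - 2) / 6 * (3 * A ^ 2 * C + 3 * A * B ^ 2))
    (q * (q - 1) / 2 * (2 * B * C) + q * (q - 1) * (q - 2) / 6 * (6 * A * B * C + B ^ 3))
    (q * (q - 1) / 2 * C ^ 2 + q * (q - 1) * (q - 2) / 6 * (3 * A * C ^ 2 + 3 * B ^ 2 * C))
    (q * (q - 1) * (q - 2) / 6 * (3 * B * C ^ 2))
    (q * (q - 1) * (q - 2) / 6 * C ^ 3)
  have hbound' : ∀ x : ℝ, ‖e + Δ • u + x • v‖ ^ p ≤ _ := fun x => (hbound x).trans (le_of_eq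
    (show _ = (1 + q * A + q * (q - 1) / 2 * A ^ 2 + q * (q - 1) * (q - 2) / 6 * A ^ 3) +
    (q * B + q * (q - 1) / 2 * (2 * A * B) + q * (q - 1) * (q - 2) / 6 * (3 * A ^ 2 * B)) * x +
    (q * C + q * (q - 1) / 2 * (B ^ 2 + 2 * A * C)
      + q * (q - 1) * (q - 2) / 6 * (3 * A ^ 2 * C + 3 * A * B ^ 2)) * x ^ 2 +
    (q * (q - 1) / 2 * (2 * B * C) + q * (q - 1) * (q - 2) / 6 * (6 * A * B * C + B ^ 3)) * x ^ 3 +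
    (q * (q - 1) / 2 * C ^ 2 + q * (q - 1) * (q - 2) / 6 * (3 * A * C ^ 2 + 3 * B ^ 2 * C)) * x ^ 4 +
    (q * (q - 1) * (q - 2) / 6 * (3 * B * C ^ 2)) * x ^ 5 +
    (q * (q - 1) * (q - 2) / 6 * C ^ 3) * x ^ 6 by ring))
  have hnn := fun x => (Real.rpow_nonneg (norm_nonneg (e + Δ • u + x • v)) p).trans (hbound' x)
  refine (lintegral_mono (fun x => ENNReal.ofReal_le_ofReal (hbound' x))).trans ?_
  rw [← ofReal_integral_eq_lintegral_ofReal hi (ae_of_all _ hnn), hint]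
  apply ENNReal.ofReal_le_ofReal
  rw [Real.coe_toNNReal _ hΔ.le]
  have ha : |⟪e, u⟫| ≤ H := (abs_real_inner_le_norm e u).trans (by rw [he, one_mul]; exact hu)
  have hc : |⟪e, v⟫| ≤ H := (abs_real_inner_le_norm e v).trans (by rw [he, one_mul]; exact hv)
  have hw : |⟪u, v⟫| ≤ H ^ 2 := (abs_real_inner_le_norm u v).trans (by rw [pow_two]; gcongr)
  have key := aux_arith (H := H) (Δ := Δ) (δ := δ) (a := ⟪e, u⟫) (c := ⟪e, v⟫) (w := ⟪u, v⟫)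
    (U := ‖u‖ ^ 2) (V := ‖v‖ ^ 2) (q := q) (lam := lam) hH hΔ hδ1 hs ha hc hw (by positivity)
    (by gcongr) (by positivity) (by gcongr) (by positivity) (by linarith) hphi A B C hA hB hC
  have h2q : 2 * q = p := by rw [hq]; ring
  rw [h2q] at key
  refine le_trans (le_of_eq ?_) key
  ring

lemma aux_trunc_rep {d : ℕ} (f g : EuclideanSpace ℝ (Fin d) → EuclideanSpace ℝ (Fin d))
    {h : ℝ} (hh : 0 < h) {x : EuclideanSpace ℝ (Fin d)} (hx : x ≠ 0) :
    ∃ y : EuclideanSpace ℝ (Fin d), y ≠ 0 ∧ ‖y‖ ≤ h ∧ ‖x‖⁻¹ • x = ‖y‖⁻¹ • y ∧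
      ‖x‖⁻¹ • trunc f h x = ‖y‖⁻¹ • f y ∧ ‖x‖⁻¹ • trunc g h x = ‖y‖⁻¹ • g y := by
  have hx0 : 0 < ‖x‖ := norm_pos_iff.mpr hx
  by_cases hxh : ‖x‖ ≤ h
  · refine ⟨x, hx, hxh, rfl, ?_, ?_⟩ <;> simp [trunc, hxh]
  · have hn : ‖(h / ‖x‖) • x‖ = h := by
      rw [norm_smul, Real.norm_of_nonneg (by positivity)]
      field_simp
    refine ⟨(h / ‖x‖) • x, ?_, hn.le, ?_, ?_, ?_⟩
    · rw [← norm_pos_iff, hn]; exact hh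
    · rw [hn, smul_smul]; congr 1; field_simp
    · rw [hn, trunc, if_neg hxh, smul_smul]; congr 1; field_simp
    · rw [hn, trunc, if_neg hxh, smul_smul]; congr 1; field_simp

lemma aux_onestep {d : ℕ}
    (f g : EuclideanSpace ℝ (Fin d) → EuclideanSpace ℝ (Fin d))
    (hf0 : f 0 = 0) (hg0 : g 0 = 0) {h H : ℝ} (hh : 0 < h) (hH : 1 ≤ H)
    (hlip : ∀ y : EuclideanSpace ℝ (Fin d), ‖y‖ ≤ h → ‖f y‖ ≤ H * ‖y‖ ∧ ‖g y‖ ≤ H * ‖y‖)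
    {p lam : ℝ} (hp : p ∈ Set.Ioo (0:ℝ) 1)
    (hPhi : ∀ x : EuclideanSpace ℝ (Fin d), x ≠ 0 → Phi f g p x ≤ -lam)
    {Δ δ : ℝ} (hΔ : 0 < Δ) (hδ1 : δ ≤ 1) (hs : H ^ 4 * Δ ≤ δ) (x : EuclideanSpace ℝ (Fin d)) :
    ∫⁻ z, ENNReal.ofReal (‖x + Δ • trunc f h x + z • trunc g h x‖ ^ p)
        ∂gaussianReal 0 Δ.toNNReal
      ≤ ENNReal.ofReal (1 - p * Δ * (lam - 200 * δ)) * ENNReal.ofReal (‖x‖ ^ p) := by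
  by_cases hx : x = 0
  · subst hx
    have : (0:ℝ) ^ p = 0 := Real.zero_rpow hp.1.ne'
    simp [trunc, hh.le, hf0, hg0, this]
  have hx0 : 0 < ‖x‖ := norm_pos_iff.mpr hx
  obtain ⟨y, hy, hyh, e1, e2, e3⟩ := aux_trunc_rep f g hh hx
  have hy0 : 0 < ‖y‖ := norm_pos_iff.mpr hy
  have hstep := aux_step (‖y‖⁻¹ • y) (‖y‖⁻¹ • f y) (‖y‖⁻¹ • g y) (H := H) (Δ := Δ) (δ := δ)
    (p := p) (lam := lam) (by rw [norm_smul]; simp; field_simp)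
    (by
      rw [norm_smul, norm_inv, norm_norm, inv_mul_le_iff₀ hy0, mul_comm]
      exact (hlip y hyh).1)
    (by
      rw [norm_smul, norm_inv, norm_norm, inv_mul_le_iff₀ hy0, mul_comm]
      exact (hlip y hyh).2) hH hΔ hδ1 hs hp.1 hp.2
    (by
      refine le_trans (le_of_eq ?_) (hPhi y hy)
      rw [Phi, norm_smul, norm_inv, norm_norm, inner_smul_left, inner_smul_right, inner_smul_left,
        inner_smul_right]
      simp
      field_simp)
  have hscale : ∀ z : ℝ, ENNReal.ofReal (‖x + Δ • trunc f h x + z • trunc g h x‖ ^ p)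
      = ENNReal.ofReal (‖‖y‖⁻¹ • y + Δ • (‖y‖⁻¹ • f y) + z • (‖y‖⁻¹ • g y)‖ ^ p)
        * ENNReal.ofReal (‖x‖ ^ p) := by
    intro z
    rw [← ENNReal.ofReal_mul (by positivity), ← Real.mul_rpow (by positivity) (by positivity),
      ← e1, ← e2, ← e3]
    congr 2
    rw [mul_comm, ← norm_smul_of_nonneg hx0.le]
    congr 1
    rw [smul_add, smul_add, smul_comm _ Δ, smul_comm _ z, smul_inv_smul₀ hx0.ne',
      smul_inv_smul₀ hx0.ne', smul_inv_smul₀ hx0.ne']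
  simp_rw [hscale]
  rw [lintegral_mul_const' _ _ ENNReal.ofReal_ne_top]
  gcongr

lemma aux_cont {d : ℕ} (f : EuclideanSpace ℝ (Fin d) → EuclideanSpace ℝ (Fin d)) (L : ℝ → ℝ)
    (hlip : ∀ R > (0:ℝ), ∀ x y : EuclideanSpace ℝ (Fin d), ‖x‖ ≤ R → ‖y‖ ≤ R →
      ‖f x - f y‖ ≤ L R * ‖x - y‖) : Continuous f := by
  rw [continuous_iff_continuousAt]
  intro x
  have hR : 0 < ‖x‖ + 1 := by positivity
  rw [ContinuousAt, tendsto_iff_norm_sub_tendsto_zero]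
  have hlim : Tendsto (fun y => L (‖x‖ + 1) * ‖y - x‖) (nhds x) (nhds 0) := by
    have : Continuous (fun y => L (‖x‖ + 1) * ‖y - x‖) := by fun_prop
    simpa using this.tendsto x
  refine squeeze_zero' (Eventually.of_forall fun _ => norm_nonneg _) ?_ hlim
  filter_upwards [Metric.ball_mem_nhds x one_pos] with y hy
  refine hlip _ hR y x ?_ (by linarith)
  rw [mem_ball_iff_norm] at hy
  have := norm_le_insert' y x
  linarith

lemma aux_trunc_meas {d : ℕ} (f : EuclideanSpace ℝ (Fin d) → EuclideanSpace ℝ (Fin d))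
    (hf : Continuous f) (h : ℝ) : Measurable (trunc f h) := by
  unfold trunc
  refine Measurable.ite (measurableSet_le measurable_norm measurable_const) hf.measurable ?_
  have : Measurable (fun x : EuclideanSpace ℝ (Fin d) => (h / ‖x‖) • x) := by fun_prop
  exact (by fun_prop : Measurable fun x : EuclideanSpace ℝ (Fin d) => ‖x‖ / h).smul
    (hf.measurable.comp this)

lemma aux_indep {d : ℕ} {Ω : Type} [mΩ : MeasurableSpace Ω] (P : Measure Ω)
    [IsProbabilityMeasure P]
    (ξ : ℕ → Ω → ℝ) (hξ : ∀ k, Measurable (ξ k))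
    (hind : iIndepFun (m := fun _ => Real.measurableSpace) ξ P)
    (x₀ : EuclideanSpace ℝ (Fin d)) (X : ℕ → Ω → EuclideanSpace ℝ (Fin d))
    (T : EuclideanSpace ℝ (Fin d) × ℝ → EuclideanSpace ℝ (Fin d)) (hT : Measurable T)
    (h0 : ∀ ω, X 0 ω = x₀) (hX : ∀ k ω, X (k + 1) ω = T (X k ω, ξ k ω)) (k : ℕ) :
    Measurable (X k) ∧ IndepFun (X k) (ξ k) P := by
  let m : ℕ → MeasurableSpace Ω := fun j => MeasurableSpace.comap (ξ j) Real.measurableSpace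
  have hle : ∀ j, m j ≤ mΩ := fun j => (hξ j).comap_le
  have hmeas : ∀ k, Measurable[⨆ j ∈ Set.Iio k, m j] (X k) := by
    intro k
    induction k with
    | zero =>
      have : X 0 = fun _ => x₀ := funext h0
      rw [this]
      exact measurable_const
    | succ k ih =>
      have : X (k + 1) = fun ω => T (X k ω, ξ k ω) := funext (hX k)
      rw [this]
      have hmono : (⨆ j ∈ Set.Iio k, m j) ≤ ⨆ j ∈ Set.Iio (k + 1), m j :=
        biSup_mono fun j hj => lt_trans hj (Nat.lt_succ_self k)
      have h1 : Measurable[⨆ j ∈ Set.Iio (k + 1), m j] (X k) := ih.mono hmono le_rfl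
      have h2 : Measurable[⨆ j ∈ Set.Iio (k + 1), m j] (ξ k) := by
        have : m k ≤ ⨆ j ∈ Set.Iio (k + 1), m j :=
          le_biSup m (show k ∈ Set.Iio (k + 1) from Nat.lt_succ_self k)
        exact (comap_measurable (ξ k)).mono this le_rfl
      exact hT.comp (h1.prodMk h2)
  have hle' : (⨆ j ∈ Set.Iio k, m j) ≤ mΩ := iSup₂_le fun j _ => hle j
  refine ⟨(hmeas k).mono hle' le_rfl, ?_⟩
  have := indep_iSup_of_disjoint hle hind (S := Set.Iio k) (T := {k}) (by simp)
  rw [IndepFun_iff_Indep]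
  refine indep_of_indep_of_le_left (indep_of_indep_of_le_right this ?_) (hmeas k).comap_le
  simp [m]

lemma aux_final {d : ℕ} {Ω : Type} [MeasurableSpace Ω] (P : Measure Ω)
    (X : ℕ → Ω → EuclideanSpace ℝ (Fin d)) (hXm : ∀ k, Measurable (X k))
    {p κ κ' Δ M : ℝ} (hp : 0 < p) (hκ : κ < κ') (hΔ : 0 < Δ)
    (hE : ∀ k : ℕ, ∫⁻ ω, ENNReal.ofReal (‖X k ω‖ ^ p) ∂P
      ≤ ENNReal.ofReal (Real.exp (-(p * Δ * κ'))) ^ k * ENNReal.ofReal M) :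
    ∀ᵐ ω ∂P,
      Filter.limsup
          (fun k : ℕ => if X k ω = 0 then (⊥ : EReal)
            else ((Real.log ‖X k ω‖ / (k * Δ) : ℝ) : EReal)) Filter.atTop
        ≤ ((-κ : ℝ) : EReal) := by
  let W : ℕ → Ω → ℝ≥0∞ := fun k ω =>
    ENNReal.ofReal (Real.exp (p * Δ * κ)) ^ k * ENNReal.ofReal (‖X k ω‖ ^ p)
  have hWm : ∀ k, Measurable (W k) := fun k => by
    have := hXm k
    fun_prop
  have hr : ENNReal.ofReal (Real.exp (p * Δ * κ)) * ENNReal.ofReal (Real.exp (-(p * Δ * κ'))) < 1 := by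
    rw [← ENNReal.ofReal_mul (Real.exp_pos _).le, ← Real.exp_add, ENNReal.ofReal_lt_one,
      Real.exp_lt_one_iff]
    have : p * Δ * κ < p * Δ * κ' := by gcongr
    linarith
  have hWE : ∀ k, ∫⁻ ω, W k ω ∂P ≤ (ENNReal.ofReal (Real.exp (p * Δ * κ)) *
      ENNReal.ofReal (Real.exp (-(p * Δ * κ')))) ^ k * ENNReal.ofReal M := by
    intro k
    simp only [W]
    rw [lintegral_const_mul' _ _ (ENNReal.pow_ne_top ENNReal.ofReal_ne_top), mul_pow]
    refine (mul_le_mul_right (hE k) _).trans (le_of_eq ?_)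
    ring
  have hsum : ∫⁻ ω, ∑' k, W k ω ∂P ≠ ⊤ := by
    rw [lintegral_tsum fun k => (hWm k).aemeasurable]
    refine ne_top_of_le_ne_top ?_ (ENNReal.tsum_le_tsum hWE)
    rw [ENNReal.tsum_mul_right, ENNReal.tsum_geometric]
    refine ENNReal.mul_ne_top ?_ ENNReal.ofReal_ne_top
    exact ENNReal.inv_ne_top.mpr (tsub_pos_of_lt hr).ne'
  have hae := ae_lt_top (Measurable.tsum hWm) hsum
  filter_upwards [hae] with ω hω
  have htend := ENNReal.tendsto_atTop_zero_of_tsum_ne_top hω.ne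
  have hev : ∀ᶠ k in atTop, W k ω < 1 := htend.eventually (gt_mem_nhds one_pos)
  refine Filter.limsup_le_of_le (by isBoundedDefault) ?_
  filter_upwards [hev, eventually_gt_atTop 0] with k hk hk0
  split_ifs with hx
  · exact bot_le
  · rw [EReal.coe_le_coe_iff]
    have hx0 : 0 < ‖X k ω‖ := norm_pos_iff.mpr hx
    have hk0' : (0:ℝ) < k := by exact_mod_cast hk0
    simp only [W] at hk
    rw [← ENNReal.ofReal_pow (Real.exp_pos _).le, ← ENNReal.ofReal_mul (by positivity),
      ENNReal.ofReal_lt_one] at hk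
    have hl := Real.log_lt_log (by positivity) hk
    rw [Real.log_mul (by positivity) (by positivity), Real.log_pow, Real.log_exp,
      Real.log_rpow hx0, Real.log_one] at hl
    rw [div_le_iff₀ (by positivity)]
    have : p * (k * (Δ * κ) + Real.log ‖X k ω‖) < p * 0 := by linarith
    have := lt_of_mul_lt_mul_left this hp.le
    linarith

theorem stmt18 {d : ℕ} (hd : 1 ≤ d)
    (f g : EuclideanSpace ℝ (Fin d) → EuclideanSpace ℝ (Fin d))
    (hf0 : f 0 = 0) (hg0 : g 0 = 0)
    (L : ℝ → ℝ) (hLpos : ∀ R > (0:ℝ), 0 < L R) (hLmono : MonotoneOn L (Set.Ioi 0))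
    (hlip : ∀ R > (0:ℝ), ∀ x y : EuclideanSpace ℝ (Fin d), ‖x‖ ≤ R → ‖y‖ ≤ R →
      ‖f x - f y‖ ⊔ ‖g x - g y‖ ≤ L R * ‖x - y‖)
    (p lam : ℝ) (hp : p ∈ Set.Ioo (0:ℝ) 1) (hlam : 0 < lam)
    (hPhi : ∀ x : EuclideanSpace ℝ (Fin d), x ≠ 0 → Phi f g p x ≤ -lam)
    (Δ₀ : ℝ) (hΔ₀ : 0 < Δ₀) (h : ℝ → ℝ)
    (hhpos : ∀ Δ ∈ Set.Ioc (0:ℝ) Δ₀, 0 < h Δ)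
    (hhdec : AntitoneOn h (Set.Ioc 0 Δ₀))
    (hhinf : Tendsto h (nhdsWithin 0 (Set.Ioc 0 Δ₀)) atTop)
    (hLh : Tendsto (fun Δ => L (h Δ) ^ 4 * Δ) (nhdsWithin 0 (Set.Ioc 0 Δ₀)) (nhds 0)) :
    ∀ ε ∈ Set.Ioo 0 lam, ∃ Δs ∈ Set.Ioc (0:ℝ) Δ₀, ∀ Δ ∈ Set.Ioo (0:ℝ) Δs,
      ∀ (Ω : Type) [MeasurableSpace Ω] (P : Measure Ω) [IsProbabilityMeasure P]
        (ξ : ℕ → Ω → ℝ), (∀ k, Measurable (ξ k)) →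
        iIndepFun (m := fun _ => Real.measurableSpace) ξ P →
        (∀ k, Measure.map (ξ k) P = gaussianReal 0 (Real.toNNReal Δ)) →
        ∀ (x₀ : EuclideanSpace ℝ (Fin d)) (X : ℕ → Ω → EuclideanSpace ℝ (Fin d)),
        (∀ ω, X 0 ω = x₀) →
        (∀ k ω, X (k + 1) ω
            = X k ω + Δ • trunc f (h Δ) (X k ω) + ξ k ω • trunc g (h Δ) (X k ω)) →
        ∀ᵐ ω ∂P,
          Filter.limsup
              (fun k : ℕ => if X k ω = 0 then (⊥ : EReal)
                else ((Real.log ‖X k ω‖ / (k * Δ) : ℝ) : EReal)) Filter.atTop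
            ≤ ((-(lam - ε) : ℝ) : EReal) := by
  rintro ε ⟨hε0, hεl⟩
  obtain ⟨δ, hδ0, hδ1, hδε⟩ : ∃ δ : ℝ, 0 < δ ∧ δ ≤ 1 ∧ 200 * δ ≤ ε / 2 :=
    ⟨min 1 (ε / 400), by positivity, min_le_left _ _, by
      have := min_le_right (1:ℝ) (ε / 400)
      linarith⟩
  have hid : Tendsto (fun Δ : ℝ => Δ) (nhdsWithin 0 (Set.Ioc 0 Δ₀)) (nhds 0) :=
    tendsto_nhdsWithin_of_tendsto_nhds tendsto_id
  have hev : ∀ᶠ Δ in nhdsWithin 0 (Set.Ioc 0 Δ₀), L (h Δ) ^ 4 * Δ < δ ∧ Δ < δ :=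
    (hLh.eventually (gt_mem_nhds hδ0)).and (hid.eventually (gt_mem_nhds hδ0))
  obtain ⟨r, hr, hball⟩ := Metric.mem_nhdsWithin_iff.mp hev
  refine ⟨min r Δ₀, ⟨lt_min hr hΔ₀, min_le_right _ _⟩, ?_⟩
  rintro Δ ⟨hΔ, hΔs⟩ Ω _ P _ ξ hξ hind hlaw x₀ X hX0 hX
  have hΔI : Δ ∈ Set.Ioc (0:ℝ) Δ₀ := ⟨hΔ, (hΔs.trans_le (min_le_right _ _)).le⟩
  have hsm : L (h Δ) ^ 4 * Δ < δ ∧ Δ < δ := hball ⟨by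
    rw [Metric.mem_ball, Real.dist_eq, sub_zero, abs_of_pos hΔ]
    exact hΔs.trans_le (min_le_left _ _), hΔI⟩
  have hh := hhpos Δ hΔI
  set H := max (L (h Δ)) 1 with hHdef
  have hs : H ^ 4 * Δ ≤ δ := by
    rcases max_choice (L (h Δ)) 1 with hm | hm
    · rw [hHdef, hm]; exact hsm.1.le
    · rw [hHdef, hm]; linarith [hsm.2]
  have hlipf : ∀ R > (0:ℝ), ∀ x y : EuclideanSpace ℝ (Fin d), ‖x‖ ≤ R → ‖y‖ ≤ R →
      ‖f x - f y‖ ≤ L R * ‖x - y‖ := fun R hR x y hx hy =>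
    (le_max_left _ _).trans (hlip R hR x y hx hy)
  have hlipg : ∀ R > (0:ℝ), ∀ x y : EuclideanSpace ℝ (Fin d), ‖x‖ ≤ R → ‖y‖ ≤ R →
      ‖g x - g y‖ ≤ L R * ‖x - y‖ := fun R hR x y hx hy =>
    (le_max_right _ _).trans (hlip R hR x y hx hy)
  have hlin : ∀ y : EuclideanSpace ℝ (Fin d), ‖y‖ ≤ h Δ → ‖f y‖ ≤ H * ‖y‖ ∧ ‖g y‖ ≤ H * ‖y‖ := by
    intro y hy
    have h1 := hlipf _ hh y 0 hy (by simpa using hh.le)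
    have h2 := hlipg _ hh y 0 hy (by simpa using hh.le)
    rw [hf0, sub_zero, sub_zero] at h1
    rw [hg0, sub_zero, sub_zero] at h2
    have : L (h Δ) * ‖y‖ ≤ H * ‖y‖ := by gcongr; exact le_max_left _ _
    exact ⟨h1.trans this, h2.trans this⟩
  have hFm := aux_trunc_meas f (aux_cont f L hlipf) (h Δ)
  have hGm := aux_trunc_meas g (aux_cont g L hlipg) (h Δ)
  let T : EuclideanSpace ℝ (Fin d) × ℝ → EuclideanSpace ℝ (Fin d) := fun z =>
    z.1 + Δ • trunc f (h Δ) z.1 + z.2 • trunc g (h Δ) z.1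
  have hT : Measurable T :=
    (measurable_fst.add ((hFm.comp measurable_fst).const_smul Δ)).add
      (measurable_snd.smul (hGm.comp measurable_fst))
  have hMI := aux_indep P ξ hξ hind x₀ X T hT hX0 (fun k ω => hX k ω)
  have hstep : ∀ k, ∫⁻ ω, ENNReal.ofReal (‖X (k + 1) ω‖ ^ p) ∂P ≤
      ENNReal.ofReal (Real.exp (-(p * Δ * (lam - ε / 2)))) *
        ∫⁻ ω, ENNReal.ofReal (‖X k ω‖ ^ p) ∂P := by
    intro k
    obtain ⟨hm, hi⟩ := hMI k
    have hφ : Measurable fun z => ENNReal.ofReal (‖T z‖ ^ p) := by fun_prop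
    have hpair : Measurable fun ω => (X k ω, ξ k ω) := hm.prodMk (hξ k)
    have hmap := (indepFun_iff_map_prod_eq_prod_map_map hm.aemeasurable
      (hξ k).aemeasurable).mp hi
    have e1 : ∫⁻ ω, ENNReal.ofReal (‖X (k + 1) ω‖ ^ p) ∂P
        = ∫⁻ z, ENNReal.ofReal (‖T z‖ ^ p) ∂(P.map fun ω => (X k ω, ξ k ω)) := by
      rw [lintegral_map hφ hpair]
      refine lintegral_congr fun ω => ?_
      rw [hX k ω]
    rw [e1, hmap, lintegral_prod _ hφ.aemeasurable, hlaw k]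
    have hφ1 : Measurable fun x : EuclideanSpace ℝ (Fin d) => ENNReal.ofReal (‖x‖ ^ p) := by
      fun_prop
    rw [← lintegral_map hφ1 hm, ← lintegral_const_mul _ hφ1]
    refine lintegral_mono fun x => ?_
    refine (aux_onestep f g hf0 hg0 hh (le_max_right _ _) hlin hp hPhi hΔ hδ1 hs x).trans ?_
    gcongr
    have e2 := Real.add_one_le_exp (-(p * Δ * (lam - ε / 2)))
    have e3 : p * Δ * (lam - ε / 2) ≤ p * Δ * (lam - 200 * δ) := by
      have := hp.1
      gcongr
    linarith
  refine aux_final P X (fun k => (hMI k).1) (p := p) (κ' := lam - ε / 2) (M := ‖x₀‖ ^ p) hp.1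
    (by linarith) hΔ ?_
  intro k
  induction k with
  | zero => simp [hX0]
  | succ k ih =>
    refine (hstep k).trans ((mul_le_mul_right ih _).trans (le_of_eq ?_))
    ring
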